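/- Let G be a connected simple graph with n > 3 vertices and m edges. If G has a cut vertex (a vertex whose deletion disconnects G), then mc(G) = m − n + 2. -/

import Mathlib

open SimpleGraph Filter Real

/-- An edge-coloring `c` (colors on vertex pairs, only the values on edges matter)
of `G` is a monochromatic connection coloring (MC-coloring) if every two vertices
are joined by a path all of whose edges receive the same color. -/
def IsMCColoring {V : Type*} (G : SimpleGraph V) (c : Sym2 V → ℕ) : Prop :=
  ∀ u v : V, ∃ p : G.Walk u v, p.IsPath ∧ ∃ k : ℕ, ∀ e ∈ p.edges, c e = k

/-- `mcNum G` is the maximum number of colors (counted on the edges of `G`)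
used in an MC-coloring of `G`; it is `0` if `G` admits no MC-coloring
(in particular if `G` is disconnected). -/
noncomputable def mcNum {V : Type*} (G : SimpleGraph V) : ℕ :=
  sSup {k | ∃ c : Sym2 V → ℕ, IsMCColoring G c ∧ (Set.image c G.edgeSet).ncard = k}

/-!
For the lower bound, give one color to the edges of a spanning tree and a private color to every
other edge.

For the upper bound, let `v` be a cut vertex. In each color class, contract an edge at `v`, if there
is one, and otherwise discard the class; either way at least one edge is lost per color. A
monochromatic path between two components of `G - v` passes through `v`, so its color is not
discarded and its ends stay connected; hence the union `H` of the contracted classes joins any two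
vertices from different components of `G - v`. This makes `H` a connected graph on `n - 1` vertices
with at most `m - #colors` edges, so `n - 2 ≤ m - #colors`.
-/

section

variable {V : Type*}

lemma preconnected_or_preconnected_of_forall_reachable_or {G H : SimpleGraph V}
    (h : ∀ a b, G.Reachable a b ∨ H.Reachable a b) : G.Preconnected ∨ H.Preconnected := by
  by_contra! hGH
  simp only [Preconnected, not_forall] at hGH
  obtain ⟨⟨x, y, hxy⟩, a, b, hab⟩ := hGH
  have hHy : ∀ u, H.Reachable u y := fun u ↦ by
    by_cases hux : G.Reachable u x
    · exact (h u y).resolve_left fun huy ↦ hxy (hux.symm.trans huy)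
    · exact ((h u x).resolve_left hux).trans ((h x y).resolve_left hxy)
  exact hab ((hHy a).trans (hHy b).symm)

lemma reachable_map_apply {W : Type*} {G : SimpleGraph V} (f : V → W) {a b : V}
    (h : G.Reachable a b) : (G.map f).Reachable (f a) (f b) := by
  obtain ⟨p⟩ := h
  induction p with
  | nil => rfl
  | @cons x y _ hxy _ ih =>
    by_cases hf : f x = f y
    · rwa [hf]
    · exact (map_adj_apply' hxy hf).reachable.trans ih

open Classical in
/-- The retraction of `V` onto `V \ {v}` that sends `v` to `u`. -/
noncomputable def retractTo {v u : V} (h : u ≠ v) (x : V) : ↥({v} : Set V)ᶜ :=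
  if hx : x = v then ⟨u, h⟩ else ⟨x, hx⟩

lemma retractTo_self {v u : V} (h : u ≠ v) : retractTo h v = ⟨u, h⟩ := dif_pos rfl

lemma retractTo_coe {v u : V} (h : u ≠ v) (a : ↥({v} : Set V)ᶜ) : retractTo h a = a := dif_neg a.2

/-- The contraction of the edge `vu` of `F`, realized on the vertices other than `v` by identifying
`v` with `u`; loops and repeated edges are discarded. -/
noncomputable def contractEdge (F : SimpleGraph V) {v u : V} (h : F.Adj v u) :
    SimpleGraph ↥({v} : Set V)ᶜ :=
  F.map (retractTo h.ne')

lemma reachable_contractEdge {F : SimpleGraph V} {v u : V} (h : F.Adj v u)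
    {a b : ↥({v} : Set V)ᶜ} (hab : F.Reachable a b) : (contractEdge F h).Reachable a b := by
  simpa only [contractEdge, retractTo_coe] using reachable_map_apply (retractTo h.ne') hab

lemma ncard_edgeSet_contractEdge_lt {F : SimpleGraph V} (hF : F.edgeSet.Finite) {v u : V}
    (h : F.Adj v u) : (contractEdge F h).edgeSet.ncard < F.edgeSet.ncard := by
  have hloop : retractTo h.ne' v = retractTo h.ne' u :=
    (retractTo_self h.ne').trans (retractTo_coe h.ne' ⟨u, h.ne'⟩).symm
  have hsub : (contractEdge F h).edgeSet ⊆
      Sym2.map (retractTo h.ne') '' (F.edgeSet \ {s(v, u)}) := by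
    rintro ⟨a, b⟩ ⟨hne, x, y, hxy, rfl, rfl⟩
    refine ⟨s(x, y), ⟨hxy, fun hvu ↦ hne ?_⟩, rfl⟩
    rcases Sym2.eq_iff.1 hvu with ⟨rfl, rfl⟩ | ⟨rfl, rfl⟩
    exacts [hloop, hloop.symm]
  calc (contractEdge F h).edgeSet.ncard
      ≤ (Sym2.map (retractTo h.ne') '' (F.edgeSet \ {s(v, u)})).ncard :=
        Set.ncard_le_ncard hsub (hF.sdiff.image _)
    _ ≤ (F.edgeSet \ {s(v, u)}).ncard := Set.ncard_image_le hF.sdiff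
    _ < F.edgeSet.ncard := Set.ncard_sdiff_singleton_lt_of_mem h hF

lemma exists_ncard_edgeSet_lt_forall_reachable {F : SimpleGraph V} (hF : F.edgeSet.Finite)
    (hne : F.edgeSet.Nonempty) (v : V) :
    ∃ H : SimpleGraph ↥({v} : Set V)ᶜ, H.edgeSet.ncard < F.edgeSet.ncard ∧
      ∀ a b : ↥({v} : Set V)ᶜ, F.Reachable v a → F.Reachable v b → H.Reachable a b := by
  by_cases hv : (F.neighborSet v).Nonempty
  · obtain ⟨u, hu⟩ := hv
    exact ⟨contractEdge F hu, ncard_edgeSet_contractEdge_lt hF hu,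
      fun a b ha hb ↦ reachable_contractEdge hu (ha.symm.trans hb)⟩
  · refine ⟨⊥, by simpa using (Set.ncard_pos hF).2 hne, fun a b ha _ ↦ (hv ?_).elim⟩
    exact ha.nonempty_neighborSet_left (Ne.symm a.2)

/-- The spanning subgraph of `G` formed by the edges of color `k`. -/
def colorClass {α : Type*} (G : SimpleGraph V) (c : Sym2 V → α) (k : α) : SimpleGraph V :=
  G.deleteEdges {e | c e ≠ k}

lemma mem_edgeSet_colorClass {α : Type*} {G : SimpleGraph V} {c : Sym2 V → α} {k : α}
    {e : Sym2 V} : e ∈ (colorClass G c k).edgeSet ↔ e ∈ G.edgeSet ∧ c e = k := by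
  simp [colorClass, edgeSet_deleteEdges]

lemma sum_ncard_edgeSet_colorClass {α : Type*} [DecidableEq α] (G : SimpleGraph V)
    [Fintype G.edgeSet] (c : Sym2 V → α) :
    ∑ k ∈ G.edgeFinset.image c, (colorClass G c k).edgeSet.ncard = G.edgeFinset.card := by
  rw [Finset.card_eq_sum_card_image c]
  refine Finset.sum_congr rfl fun k _ ↦ ?_
  rw [← Set.ncard_coe_finset]
  congr 1
  ext e
  simp [mem_edgeSet_colorClass]

lemma exists_ncard_edgeSet_add_ncard_image_le {α : Type*} (G : SimpleGraph V) [Fintype G.edgeSet]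
    (c : Sym2 V → α) (v : V) :
    ∃ H : SimpleGraph ↥({v} : Set V)ᶜ,
      H.edgeSet.ncard + (c '' G.edgeSet).ncard ≤ G.edgeFinset.card ∧
      ∀ k ∈ c '' G.edgeSet, ∀ a b : ↥({v} : Set V)ᶜ, (colorClass G c k).Reachable v a →
        (colorClass G c k).Reachable v b → H.Reachable a b := by
  classical
  let K := G.edgeFinset.image c
  have hK : (K : Set α) = c '' G.edgeSet := by simp [K]
  have hfin (k : α) : (colorClass G c k).edgeSet.Finite :=
    G.edgeSet.toFinite.subset (edgeSet_mono (deleteEdges_le _))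
  have hne : ∀ k : K, (colorClass G c k).edgeSet.Nonempty := fun ⟨k, hk⟩ ↦ by
    obtain ⟨e, he⟩ := hK ▸ Finset.mem_coe.2 hk
    exact ⟨e, mem_edgeSet_colorClass.2 he⟩
  choose H hHcard hHreach using fun k : K ↦
    exists_ncard_edgeSet_lt_forall_reachable (hfin k) (hne k) v
  refine ⟨⨆ k, H k, ?_, fun k hk a b ha hb ↦ ?_⟩
  · calc (⨆ k, H k).edgeSet.ncard + (c '' G.edgeSet).ncard
        ≤ ∑ k, (H k).edgeSet.ncard + K.card := by
          rw [edgeSet_iSup, ← hK, Set.ncard_coe_finset]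
          gcongr
          exact Set.ncard_iUnion_le_of_fintype _
      _ = ∑ k : K, ((H k).edgeSet.ncard + 1) := by simp [Finset.sum_add_distrib]
      _ ≤ ∑ k : K, (colorClass G c k).edgeSet.ncard := Finset.sum_le_sum fun k _ ↦ hHcard k
      _ = G.edgeFinset.card := by
          rw [K.sum_coe_sort fun k ↦ (colorClass G c k).edgeSet.ncard, sum_ncard_edgeSet_colorClass]
  · rw [← hK] at hk
    exact (hHreach ⟨k, hk⟩ a b ha hb).mono (le_iSup H ⟨k, hk⟩)

namespace IsMCColoring

variable {G : SimpleGraph V} {c : Sym2 V → ℕ}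

lemma reachable_induce_compl_or_exists_colorClass (hc : IsMCColoring G c) {v : V}
    (a b : ↥({v} : Set V)ᶜ) :
    (G.induce ({v} : Set V)ᶜ).Reachable a b ∨
      ∃ k ∈ c '' G.edgeSet,
        (colorClass G c k).Reachable v a ∧ (colorClass G c k).Reachable v b := by
  classical
  obtain ⟨p, -, k, hk⟩ := hc a b
  by_cases hv : v ∈ p.support
  · right
    let q := p.transfer (colorClass G c k) fun e he ↦
      mem_edgeSet_colorClass.2 ⟨p.edges_subset_edgeSet he, hk e he⟩
    have hvq : v ∈ q.support := by simpa [q] using hv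
    have hva : (colorClass G c k).Reachable v a := (q.takeUntil v hvq).reachable.symm
    obtain ⟨u, hu⟩ := hva.nonempty_neighborSet_left (Ne.symm a.2)
    exact ⟨k, ⟨s(v, u), mem_edgeSet_colorClass.1 hu⟩, hva, (q.dropUntil v hvq).reachable⟩
  · left
    exact ⟨p.induce _ fun x hx ↦ ne_of_mem_of_not_mem hx hv⟩

theorem ncard_image_edgeSet_add_card_le [Fintype V] [Fintype G.edgeSet] (hc : IsMCColoring G c)
    {v : V} (hv : ¬ (G.induce ({v} : Set V)ᶜ).Preconnected) :
    (c '' G.edgeSet).ncard + Fintype.card V ≤ G.edgeFinset.card + 2 := by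
  obtain ⟨H, hHcard, hHreach⟩ := exists_ncard_edgeSet_add_ncard_image_le G c v
  have hHpre : H.Preconnected := by
    refine (preconnected_or_preconnected_of_forall_reachable_or fun a b ↦ ?_).resolve_left hv
    refine (hc.reachable_induce_compl_or_exists_colorClass a b).imp_right ?_
    rintro ⟨k, hk, ha, hb⟩
    exact hHreach k hk a b ha hb
  have : Nonempty ↥({v} : Set V)ᶜ := by
    by_contra hempty
    exact hv fun a ↦ (hempty ⟨a⟩).elim
  have hvert : Nat.card ↥({v} : Set V)ᶜ ≤ H.edgeSet.ncard + 1 :=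
    Connected.card_vert_le_card_edgeSet_add_one ⟨hHpre⟩
  have hcompl : Nat.card ↥({v} : Set V)ᶜ + 1 = Fintype.card V := by
    rw [Nat.card_coe_set_eq, add_comm, ← Set.ncard_singleton v, Set.ncard_add_ncard_compl,
      Nat.card_eq_fintype_card]
  omega

end IsMCColoring

lemma exists_coloring_ncard_image_add_ncard {α : Type*} {S E : Set α} (hSE : S ⊆ E)
    (hS : S.Nonempty) (hE : E.Finite) :
    ∃ c : α → ℕ, (∀ e ∈ S, c e = 0) ∧ (c '' E).ncard + S.ncard = E.ncard + 1 := by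
  classical
  obtain ⟨f, hf⟩ := Set.countable_iff_exists_injOn.1 hE.countable
  let c : α → ℕ := fun e ↦ if e ∈ S then 0 else f e + 1
  have hcS : ∀ e ∈ S, c e = 0 := fun e he ↦ if_pos he
  have hc_sdiff : Set.EqOn c (fun e ↦ f e + 1) (E \ S) := fun e he ↦ if_neg he.2
  have himage : c '' E = insert 0 ((fun e ↦ f e + 1) '' (E \ S)) := by
    rw [← hc_sdiff.image_eq, ← Set.union_sdiff_cancel hSE, Set.image_union,
      Set.image_congr hcS, hS.image_const, Set.union_sdiff_cancel hSE, Set.singleton_union]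
  have hinj : Set.InjOn (fun e ↦ f e + 1) (E \ S) := fun a ha b hb hab ↦
    hf ha.1 hb.1 (Nat.succ_injective hab)
  refine ⟨c, hcS, ?_⟩
  rw [himage, Set.ncard_insert_of_notMem (by simp) (hE.sdiff.image _), hinj.ncard_image,
    add_right_comm, Set.ncard_sdiff_add_ncard_of_subset hSE hE]

theorem exists_isMCColoring_ncard_image_edgeSet_add_card [Fintype V] [Nontrivial V]
    {G : SimpleGraph V} [Fintype G.edgeSet] (hG : G.Connected) :
    ∃ c : Sym2 V → ℕ, IsMCColoring G c ∧
      (c '' G.edgeSet).ncard + Fintype.card V = G.edgeFinset.card + 2 := by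
  classical
  obtain ⟨T, hTG, hT⟩ := hG.exists_isTree_le
  have hTcard : T.edgeSet.ncard + 1 = Fintype.card V := by
    rw [Set.ncard_eq_toFinset_card']
    exact hT.card_edgeFinset
  have hTne : T.edgeSet.Nonempty := by
    rw [← Set.ncard_pos]
    have := Fintype.one_lt_card (α := V)
    omega
  obtain ⟨c, hcT, hcard⟩ :=
    exists_coloring_ncard_image_add_ncard (edgeSet_mono hTG) hTne (Set.toFinite _)
  refine ⟨c, fun u v ↦ ?_, ?_⟩
  · obtain ⟨p, hp⟩ := hT.connected.exists_isPath u v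
    refine ⟨p.mapLe hTG, (Walk.isPath_mapLe hTG).2 hp, 0, fun e he ↦ hcT e ?_⟩
    rw [Walk.edges_mapLe_eq_edges] at he
    exact p.edges_subset_edgeSet he
  · rw [Set.ncard_eq_toFinset_card' G.edgeSet, ← edgeFinset] at hcard
    omega

end

/-- If `G` is a connected graph with `n > 3` vertices having a cut vertex
(a vertex whose deletion disconnects `G`), then `mc(G) = m - n + 2`. -/
theorem mc_eq_of_cut_vertex {V : Type*} [Fintype V] [DecidableEq V]
    (G : SimpleGraph V) [DecidableRel G.Adj] (hG : G.Connected)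
    (hn : 3 < Fintype.card V)
    (hv : ∃ v : V, ¬ (G.induce ({v} : Set V)ᶜ).Connected) :
    (mcNum G : ℤ) = (G.edgeFinset.card : ℤ) - (Fintype.card V : ℤ) + 2 := by
  have : Nontrivial V := Fintype.one_lt_card_iff_nontrivial.1 (by omega)
  obtain ⟨v, hv⟩ := hv
  have : Nonempty ↥({v} : Set V)ᶜ := (exists_ne v).elim fun w hw ↦ ⟨w, hw⟩
  have hv_pre : ¬ (G.induce ({v} : Set V)ᶜ).Preconnected := fun h ↦ hv ⟨h⟩
  obtain ⟨c, hc, hcard⟩ := exists_isMCColoring_ncard_image_edgeSet_add_card hG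
  have hmax : IsGreatest {k | ∃ c : Sym2 V → ℕ, IsMCColoring G c ∧
      (Set.image c G.edgeSet).ncard = k} (c '' G.edgeSet).ncard := by
    refine ⟨⟨c, hc, rfl⟩, ?_⟩
    rintro _ ⟨c', hc', rfl⟩
    have := hc'.ncard_image_edgeSet_add_card_le hv_pre
    omega
  have hmc : mcNum G = (c '' G.edgeSet).ncard := hmax.csSup_eq
  omega
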